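/- arXiv:1304.0858 — 2 statements merged into one kernel-verified Lean document; each statement's English description precedes it below -/
import Mathlib

section
/- For each c, the symmetric q-Painlevé II equation X(pt) X(p^{-1}t) = p^2 c^2 (1 + tX(t)) / ((t + X(t)) X(t)) is satisfied by any solution of the discrete Riccati equation X(pt) = -p (1 + t X(t))/X(t) when c = 1. -/
section Riccati

variable {K : Type*} [Field K] {p t x y : K}

theorem mul_add_eq_neg_of_riccati_step (hp : p ≠ 0) (hy : y ≠ 0)
    (hxy : x = -p * (1 + p⁻¹ * t * y) / y) : y * (t + x) = -p := by
  rw [hxy]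
  field_simp
  ring

theorem eq_neg_div_add_of_riccati_step (hp : p ≠ 0) (hy : y ≠ 0)
    (hxy : x = -p * (1 + p⁻¹ * t * y) / y) : y = -p / (t + x) := by
  have hmul : y * (t + x) = -p := mul_add_eq_neg_of_riccati_step hp hy hxy
  have hne : t + x ≠ 0 := right_ne_zero_of_mul (hmul ▸ neg_ne_zero.mpr hp)
  exact eq_div_of_mul_eq hne hmul

theorem symQP2_of_riccati_general (hp : p ≠ 0) {X : K → K} (hX : ∀ t, X t ≠ 0)
    (hRic : ∀ t, X (p * t) = -p * (1 + t * X t) / X t) (t : K) :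
    X (p * t) * X (p⁻¹ * t) = p ^ 2 * (1 + t * X t) / ((t + X t) * X t) := by
  have hRic_prev : X t = -p * (1 + p⁻¹ * t * X (p⁻¹ * t)) / X (p⁻¹ * t) := by
    simpa only [mul_inv_cancel_left₀ hp] using hRic (p⁻¹ * t)
  have hprev : X (p⁻¹ * t) = -p / (t + X t) :=
    eq_neg_div_add_of_riccati_step hp (hX _) hRic_prev
  calc X (p * t) * X (p⁻¹ * t)
      = -p * (1 + t * X t) / X t * (-p / (t + X t)) := by rw [hRic t, hprev]
    _ = p ^ 2 * (1 + t * X t) / ((t + X t) * X t) := by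
      rw [div_mul_div_comm, mul_comm (X t) (t + X t)]
      ring

end Riccati

/-- Any solution of the discrete Riccati equation `X(pt) = -p(1 + tX(t))/X(t)` satisfies the
symmetric q-Painlevé II equation `X(pt) X(p⁻¹t) = p² c² (1 + tX(t))/((t + X(t)) X(t))`
when `c = 1`. -/
theorem symQP2_of_riccati (p c : ℂ) (hp : p ≠ 0) (X : ℂ → ℂ)
    (hX : ∀ t, X t ≠ 0) (hXt : ∀ t, t + X t ≠ 0)
    (hRic : ∀ t, X (p * t) = -p * (1 + t * X t) / X t)
    (hc : c = 1) :
    ∀ t, X (p * t) * X (p⁻¹ * t) = p ^ 2 * c ^ 2 * (1 + t * X t) / ((t + X t) * X t) := by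
  simpa only [hc, one_pow, mul_one] using symQP2_of_riccati_general hp hX hRic
end

section
/- As q → 1⁻ with q = e^{log q}, the q-Pochhammer symbol satisfies log(q;q)_∞ = π²/(6 log q) + (1/2) log(-2π/log q) + O(log q). -/
open scoped Real
open Asymptotics Filter

/-!
On the imaginary axis the Dedekind eta function is `η(it) = e^{-πt/12} (q;q)_∞` with
`q = e^{-2πt}`, so its transformation law `|η(-1/z)| = √|z| |η(z)|` relates `(q;q)_∞` to
`(r;r)_∞`, where `log q · log r = 4π²`. Taking logarithms gives the exact formula
`log (q;q)_∞ = π²/(6 log q) + ½ log(-2π/log q) - (log q)/24 + log (r;r)_∞`. As `q → 1⁻` the last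
term is `O(r) = O(e^{4π²/log q})`, hence smaller than every power of `log q`.
-/

open scoped ModularForm Topology
open UpperHalfPlane (upperHalfPlaneSet)

section EulerFunction

/-- The Euler function `(q;q)_∞ = ∏_{n ≥ 1} (1 - q ^ n)`, indexed from `n = 0` and defined over any
topological ring so that its real and complex versions can be compared. The product takes the junk
value `1` where it does not converge. -/
noncomputable def eulerFunction {R : Type*} [CommRing R] [TopologicalSpace R] (q : R) : R :=
  ∏' n : ℕ, (1 - q ^ (n + 1))

lemma eulerFunction_zero {R : Type*} [CommRing R] [TopologicalSpace R] :
    eulerFunction (0 : R) = 1 := by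
  simp [eulerFunction]

lemma ofReal_eulerFunction (q : ℝ) : ((eulerFunction q : ℝ) : ℂ) = eulerFunction (q : ℂ) := by
  simpa [eulerFunction] using Complex.isometry_ofReal.isClosedEmbedding.map_tprod
    (g := Complex.ofRealHom) fun n : ℕ ↦ 1 - q ^ (n + 1)

lemma differentiableAt_eulerFunction_complex {q : ℂ} (hq : ‖q‖ < 1) :
    DifferentiableAt ℂ eulerFunction q :=
  ModularForm.differentiableOn_tprod_one_sub_pow.differentiableAt
    (Metric.isOpen_ball.mem_nhds (mem_ball_zero_iff.mpr hq))

lemma differentiableAt_eulerFunction_real {q : ℝ} (hq : |q| < 1) :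
    DifferentiableAt ℝ eulerFunction q := by
  have hdiff : DifferentiableAt ℂ eulerFunction (q : ℂ) :=
    differentiableAt_eulerFunction_complex (by simpa using hq)
  simpa [← ofReal_eulerFunction] using hdiff.hasDerivAt.real_of_complex.differentiableAt

lemma log_eulerFunction_isBigO :
    (fun q : ℝ ↦ Real.log (eulerFunction q)) =O[𝓝 0] fun q ↦ q := by
  have hdiff : DifferentiableAt ℝ (fun q : ℝ ↦ Real.log (eulerFunction q)) 0 :=
    (differentiableAt_eulerFunction_real (by simp)).log (by simp [eulerFunction_zero])
  simpa [eulerFunction_zero] using hdiff.isBigO_sub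

end EulerFunction

section ModularTransformation

lemma norm_csqrt (z : ℂ) : ‖Complex.sqrt z‖ = √‖z‖ := by
  rw [Complex.sqrt, Real.sqrt_eq_rpow, ← Complex.norm_cpow_real]
  norm_num

lemma norm_eta_neg_one_div {z : ℂ} (hz : z ∈ upperHalfPlaneSet) :
    ‖η (-1 / z)‖ = √‖z‖ * ‖η z‖ := by
  simpa [norm_csqrt] using congrArg norm (ModularForm.eta_comp_eq_csqrt_I_inv hz)

lemma norm_eta_eq_exp_mul_norm_eulerFunction (z : ℂ) :
    ‖η z‖ = Real.exp (-π * z.im / 12) * ‖eulerFunction (Function.Periodic.qParam 1 z)‖ := by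
  rw [ModularForm.eta, norm_mul, Function.Periodic.norm_qParam, eulerFunction]
  ring_nf

lemma I_mul_ofReal_mem_upperHalfPlaneSet {t : ℝ} (ht : 0 < t) :
    Complex.I * t ∈ upperHalfPlaneSet := by
  simpa [upperHalfPlaneSet] using ht

lemma qParam_one_I_mul_ofReal (t : ℝ) :
    Function.Periodic.qParam 1 (Complex.I * t) = (Real.exp (-2 * π * t) : ℝ) := by
  rw [Function.Periodic.qParam, Complex.ofReal_exp]
  congr 1
  push_cast
  linear_combination (2 * π * t : ℂ) * Complex.I_sq

lemma log_norm_eta_I_mul {t : ℝ} (ht : 0 < t) :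
    Real.log ‖η (Complex.I * t)‖
      = -π * t / 12 + Real.log (eulerFunction (Real.exp (-2 * π * t))) := by
  have hnorm : ‖η (Complex.I * t)‖
      = Real.exp (-π * t / 12) * ‖eulerFunction (Real.exp (-2 * π * t))‖ := by
    rw [norm_eta_eq_exp_mul_norm_eulerFunction, qParam_one_I_mul_ofReal, ← ofReal_eulerFunction,
      Complex.norm_real]
    simp
  have heuler : ‖eulerFunction (Real.exp (-2 * π * t))‖ ≠ 0 :=
    right_ne_zero_of_mul
      (hnorm ▸ norm_ne_zero_iff.mpr
        (ModularForm.eta_ne_zero (I_mul_ofReal_mem_upperHalfPlaneSet ht)))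
  rw [hnorm, Real.log_mul (Real.exp_ne_zero _) heuler, Real.log_exp, Real.norm_eq_abs,
    Real.log_abs]

lemma log_norm_eta_I_mul_inv {t : ℝ} (ht : 0 < t) :
    Real.log ‖η (Complex.I * (t⁻¹ : ℝ))‖ = Real.log t / 2 + Real.log ‖η (Complex.I * t)‖ := by
  have hmem := I_mul_ofReal_mem_upperHalfPlaneSet ht
  have hinv : Complex.I * (t⁻¹ : ℝ) = -1 / (Complex.I * t) := by
    simp [neg_div, mul_comm]
  have hnorm : ‖Complex.I * (t : ℂ)‖ = t := by simp [ht.le]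
  rw [hinv, norm_eta_neg_one_div hmem, hnorm,
    Real.log_mul (Real.sqrt_ne_zero'.mpr ht) (norm_ne_zero_iff.mpr (ModularForm.eta_ne_zero hmem)),
    Real.log_sqrt ht.le]

lemma log_eulerFunction_exp_neg_two_pi_mul {t : ℝ} (ht : 0 < t) :
    Real.log (eulerFunction (Real.exp (-2 * π * t)))
      = -π * t⁻¹ / 12 + π * t / 12 - Real.log t / 2
        + Real.log (eulerFunction (Real.exp (-2 * π * t⁻¹))) := by
  linarith [log_norm_eta_I_mul ht, log_norm_eta_I_mul (inv_pos.mpr ht), log_norm_eta_I_mul_inv ht]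

lemma log_eulerFunction_eq_add_log_eulerFunction_exp {q : ℝ} (hq₀ : 0 < q) (hq₁ : q < 1) :
    Real.log (eulerFunction q)
      = π ^ 2 / (6 * Real.log q) + (1 / 2) * Real.log (-(2 * π) / Real.log q) - Real.log q / 24
        + Real.log (eulerFunction (Real.exp (4 * π ^ 2 / Real.log q))) := by
  have hlog : Real.log q < 0 := Real.log_neg hq₀ hq₁
  obtain ⟨t, hlog_eq⟩ : ∃ t, Real.log q = -2 * π * t :=
    ⟨Real.log q / (-2 * π), by field_simp⟩
  have ht : 0 < t := by nlinarith [Real.pi_pos]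
  have hq : q = Real.exp (-2 * π * t) := by rw [← hlog_eq, Real.exp_log hq₀]
  have hdual : 4 * π ^ 2 / (-2 * π * t) = -2 * π * t⁻¹ := by field_simp; norm_num
  have hlead : π ^ 2 / (6 * (-2 * π * t)) = -π * t⁻¹ / 12 := by field_simp; norm_num
  have hratio : -(2 * π) / (-2 * π * t) = t⁻¹ := by field_simp
  rw [hlog_eq, hdual, hlead, hratio, Real.log_inv, hq, log_eulerFunction_exp_neg_two_pi_mul ht]
  ring

end ModularTransformation

section Asymptotics

lemma exp_div_isLittleO_neg_rpow_nhdsLT_zero {c : ℝ} (hc : 0 < c) (s : ℝ) :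
    (fun x ↦ Real.exp (c / x)) =o[𝓝[<] 0] fun x ↦ (-x) ^ s := by
  have hinv : Tendsto (fun x : ℝ ↦ -x⁻¹) (𝓝[<] 0) atTop :=
    tendsto_neg_atBot_atTop.comp tendsto_inv_nhdsLT_zero
  refine ((isLittleO_exp_neg_mul_rpow_atTop hc (-s)).comp_tendsto hinv).congr' ?_ ?_
  · exact .of_forall fun x ↦ by simp [div_eq_mul_inv]
  · filter_upwards [self_mem_nhdsWithin] with x hx
    have hx' : 0 ≤ -x := neg_nonneg.mpr (le_of_lt hx)
    simp only [Function.comp_apply, ← inv_neg, Real.inv_rpow hx', Real.rpow_neg hx', inv_inv]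

lemma tendsto_log_nhdsLT_one : Tendsto Real.log (𝓝[<] 1) (𝓝[<] 0) := by
  refine tendsto_nhdsWithin_iff.mpr ⟨?_, ?_⟩
  · exact (Real.log_one ▸ (Real.continuousAt_log one_ne_zero).tendsto).mono_left nhdsWithin_le_nhds
  · filter_upwards [Ioo_mem_nhdsLT one_pos] with q hq using Real.log_neg hq.1 hq.2

lemma tendsto_exp_div_log_nhdsLT_one {c : ℝ} (hc : 0 < c) :
    Tendsto (fun q ↦ Real.exp (c / Real.log q)) (𝓝[<] 1) (𝓝 0) := by
  simp only [div_eq_mul_inv]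
  exact Real.tendsto_exp_atBot.comp
    ((tendsto_inv_nhdsLT_zero.comp tendsto_log_nhdsLT_one).const_mul_atBot hc)

lemma exp_div_log_isBigO_log {c : ℝ} (hc : 0 < c) :
    (fun q ↦ Real.exp (c / Real.log q)) =O[𝓝[<] 1] Real.log := by
  simpa [Function.comp_def] using
    ((exp_div_isLittleO_neg_rpow_nhdsLT_zero hc 1).comp_tendsto tendsto_log_nhdsLT_one).isBigO

lemma log_eulerFunction_sub_isBigO_exp :
    (fun q ↦ Real.log (eulerFunction q) - (π ^ 2 / (6 * Real.log q)
        + (1 / 2) * Real.log (-(2 * π) / Real.log q) - Real.log q / 24))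
      =O[𝓝[<] 1] fun q ↦ Real.exp (4 * π ^ 2 / Real.log q) := by
  refine (log_eulerFunction_isBigO.comp_tendsto
    (tendsto_exp_div_log_nhdsLT_one (c := 4 * π ^ 2) (by positivity))).congr' ?_ .rfl
  filter_upwards [Ioo_mem_nhdsLT one_pos] with q hq
  rw [log_eulerFunction_eq_add_log_eulerFunction_exp hq.1 hq.2, add_sub_cancel_left,
    Function.comp_apply]

end Asymptotics

/-- As `q → 1⁻`, `log(q;q)_∞ = π²/(6 log q) + (1/2) log(-2π/log q) + O(log q)`. -/
theorem qPochhammer_asymptotic_q :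
    (fun q : ℝ => Real.log (∏' n : ℕ, (1 - q ^ (n + 1)))
        - (π ^ 2 / (6 * Real.log q) + (1 / 2) * Real.log (-(2 * π) / Real.log q)))
      =O[nhdsWithin 1 (Set.Ioo (0:ℝ) 1)] (fun q : ℝ => Real.log q) := by
  rw [nhdsWithin_Ioo_eq_nhdsLT one_pos]
  have hremainder := log_eulerFunction_sub_isBigO_exp.trans
    (exp_div_log_isBigO_log (c := 4 * π ^ 2) (by positivity))
  have hlinear := (isBigO_refl Real.log (𝓝[<] 1)).const_mul_left (-1 / 24)
  refine (hremainder.add hlinear).congr_left fun q ↦ ?_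
  rw [eulerFunction]
  ring
end
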